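/- arXiv:2504.01142 — 4 statements merged into one kernel-verified Lean document; each statement's English description precedes it below -/
import Mathlib

section
/- Let θ ≥ 0 be a real number, let A = ⟨a_1, …, a_c⟩ be a nonempty finite sequence of points of ℝ², and let B be a nonempty finite sequence of points of ℝ². Then for every index j with 1 ≤ j ≤ c, D_H(A, B) ≥ θ^{c−j} · min_{b ∈ B} d(a_j, b), where d is the Euclidean distance. (The decayed pointwise lower bound underlying the k-bound pruning strategy and the intermediate-buffer invariant.) -/
/-!
Follow one point `a` of `A` through the recursion. Dropping the last points of both sequences costs
one factor `θ` and brings `a` one place closer to the end; dropping only the last point of `B` costs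
nothing and leaves `a` where it is. So when `a` becomes the last point, exactly as many factors have
accumulated as there were points after it, and there the value is at least the distance from `a` to
a point of `B`. If `B` is exhausted earlier, the value is `∞`.

Replacing the minimum over `B` by an arbitrary lower bound `r` of the distances makes the induction
close, because such an `r` remains a lower bound when `B` is shortened.
-/

open scoped ENNReal

noncomputable section

abbrev Pt := EuclideanSpace ℝ (Fin 2)

/-- Historical trajectory distance on reversed lists (head = last point). -/
noncomputable def DHaux (θ : ℝ) : List Pt → List Pt → ℝ≥0∞
  | [], _ => ⊤
  | _ :: _, [] => ⊤
  | [a], [b] => edist a b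
  | a :: A, b :: B =>
      max (edist a b) (min (ENNReal.ofReal θ * DHaux θ A B) (DHaux θ (a :: A) B))
termination_by A B => A.length + B.length

/-- Historical trajectory distance `D_H(A, B)`. -/
noncomputable def DH (θ : ℝ) (A B : List Pt) : ℝ≥0∞ :=
  DHaux θ A.reverse B.reverse

section

variable {θ : ℝ} {A B : List Pt} {i : ℕ} {r : ℝ≥0∞}

theorem pow_mul_le_DHaux (hi : i < A.length) (hr : ∀ b ∈ B, r ≤ edist A[i] b) :
    ENNReal.ofReal θ ^ i * r ≤ DHaux θ A B := by
  fun_induction DHaux θ A B generalizing i with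
  | case1 => exact absurd hi (Nat.not_lt_zero i)
  | case2 => exact le_top
  | case3 a b =>
    obtain rfl : i = 0 := Nat.lt_one_iff.mp hi
    simpa using hr
  | case4 a A b B _ ih_both ih_right =>
    have hr_tail : ∀ c ∈ B, r ≤ edist (a :: A)[i] c :=
      fun c hc => hr c (List.mem_cons_of_mem b hc)
    cases i with
    | zero =>
      rw [pow_zero, one_mul]
      exact le_max_of_le_left (hr b List.mem_cons_self)
    | succ i =>
      refine le_max_of_le_right (le_min ?_ (ih_right hi hr_tail))
      calc
        ENNReal.ofReal θ ^ (i + 1) * r = ENNReal.ofReal θ * (ENNReal.ofReal θ ^ i * r) := by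
          rw [pow_succ', mul_assoc]
        _ ≤ ENNReal.ofReal θ * DHaux θ A B := by
          gcongr
          exact ih_both (Nat.lt_of_succ_lt_succ hi) hr_tail

theorem pow_mul_le_DH (hi : i < A.length) (hr : ∀ b ∈ B, r ≤ edist A[i] b) :
    ENNReal.ofReal θ ^ (A.length - 1 - i) * r ≤ DH θ A B := by
  have hrev : A.length - 1 - i < A.reverse.length := by
    rw [List.length_reverse]
    omega
  have hget : A.reverse[A.length - 1 - i] = A[i] := by
    rw [List.getElem_reverse]
    congr 1
    omega
  refine pow_mul_le_DHaux hrev fun b hb => ?_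
  rw [hget]
  exact hr b (List.mem_reverse.mp hb)

end

/-- Decayed pointwise lower bound: for every index j (1-indexed, 1 ≤ j ≤ c = |A|),
D_H(A, B) ≥ θ^(c−j) · min_{b ∈ B} d(a_j, b). -/
theorem DH_ge_decayed_pointwise (θ : ℝ) (hθ : 0 ≤ θ) (A B : List Pt)
    (hA : A ≠ []) (hB : B ≠ []) (j : ℕ) (hj1 : 1 ≤ j) (hj2 : j ≤ A.length) :
    ENNReal.ofReal θ ^ (A.length - j) *
        ⨅ b ∈ B, edist (A.get ⟨j - 1, by omega⟩) b ≤ DH θ A B := by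
  have hexp : A.length - j = A.length - 1 - (j - 1) := by omega
  rw [hexp]
  exact pow_mul_le_DH (by omega) fun b hb => iInf₂_le b hb

end
end

section
/- Soundness of k-bound pruning: Let θ ≥ 0 and 0 ≤ α ≤ 1 be real numbers, let A = ⟨a_1, …, a_c⟩ and B be nonempty finite sequences of points of ℝ², let dist_T ≥ 0 be a real number (the target-trajectory distance), and let dist_k ≥ 0 be a real threshold. If for some index j with 1 ≤ j ≤ c one has α · θ^{c−j} · min_{b ∈ B} d(a_j, b) ≥ dist_k − (1−α) · dist_T, then the object-trajectory real-time distance satisfies α · D_H(A, B) + (1−α) · dist_T ≥ dist_k. -/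
open scoped ENNReal

noncomputable section

/-!
Unfold the recursion along any choice of branches. The branch `D_H(A⁻, B⁻)` is weighted by `θ` and
the branch `D_H(A, B⁻)` by `1`, and only the former shortens `A`. So either `B` is exhausted, with
value `∞`, after at most `c - j` weighted steps, or `a_j` becomes the last point of `A` after exactly
`c - j` of them and is then compared with some point of `B`. In both cases the contribution is at
least `θ ^ (c - j) * min_{b ∈ B} d(a_j, b)`, also when `θ = 0`, since `0 * ∞ = 0`.
-/

theorem DHaux_cons_cons (θ : ℝ) (a b : Pt) {A B : List Pt} (hAB : A = [] → B ≠ []) :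
    DHaux θ (a :: A) (b :: B) =
      max (edist a b) (min (ENNReal.ofReal θ * DHaux θ A B) (DHaux θ (a :: A) B)) := by
  rw [DHaux]
  exact hAB

theorem edist_le_DHaux_cons_cons (θ : ℝ) (a b : Pt) (A B : List Pt) :
    edist a b ≤ DHaux θ (a :: A) (b :: B) := by
  by_cases hAB : A = [] → B ≠ []
  · rw [DHaux_cons_cons θ a b hAB]
    exact le_max_left _ _
  · push Not at hAB
    obtain ⟨rfl, rfl⟩ := hAB
    rw [DHaux]

theorem pow_mul_iInf_edist_le_DHaux (θ : ℝ) (A B : List Pt) (i : ℕ) (hi : i < A.length) :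
    ENNReal.ofReal θ ^ i * (⨅ b ∈ B, edist A[i] b) ≤ DHaux θ A B := by
  induction A, B using DHaux.induct generalizing i with
  | case1 B => exact absurd hi (Nat.not_lt_zero i)
  | case2 a A => simp [DHaux]
  | case3 a b =>
    obtain rfl : i = 0 := by simpa using hi
    simp [DHaux]
  | case4 a A b B hAB ih_drop_both ih_drop_right =>
    cases i with
    | zero =>
      calc ENNReal.ofReal θ ^ 0 * (⨅ c ∈ b :: B, edist a c)
          = ⨅ c ∈ b :: B, edist a c := by rw [pow_zero, one_mul]
        _ ≤ edist a b := iInf₂_le b List.mem_cons_self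
        _ ≤ DHaux θ (a :: A) (b :: B) := edist_le_DHaux_cons_cons θ a b A B
    | succ i =>
      have hi' : i < A.length := Nat.lt_of_succ_lt_succ hi
      have drop_both : ENNReal.ofReal θ ^ (i + 1) * (⨅ c ∈ B, edist A[i] c) ≤
          ENNReal.ofReal θ * DHaux θ A B := by
        rw [pow_succ', mul_assoc]
        gcongr
        exact ih_drop_both i hi'
      have drop_right : ENNReal.ofReal θ ^ (i + 1) * (⨅ c ∈ B, edist A[i] c) ≤
          DHaux θ (a :: A) B := ih_drop_right (i + 1) hi
      calc ENNReal.ofReal θ ^ (i + 1) * (⨅ c ∈ b :: B, edist A[i] c)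
          ≤ ENNReal.ofReal θ ^ (i + 1) * (⨅ c ∈ B, edist A[i] c) := by
            gcongr _ * ?_
            exact biInf_mono fun _ => List.mem_cons_of_mem b
        _ ≤ min (ENNReal.ofReal θ * DHaux θ A B) (DHaux θ (a :: A) B) :=
            le_min drop_both drop_right
        _ ≤ DHaux θ (a :: A) (b :: B) := by
          rw [DHaux_cons_cons θ a b hAB]
          exact le_max_right _ _

theorem pow_mul_iInf_edist_le_DH (θ : ℝ) (A B : List Pt) (i : ℕ) (hi : i < A.length) :
    ENNReal.ofReal θ ^ (A.length - 1 - i) * (⨅ b ∈ B, edist A[i] b) ≤ DH θ A B := by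
  have hrev : A.length - 1 - i < A.reverse.length := by
    rw [List.length_reverse]
    omega
  have hget : A.reverse[A.length - 1 - i] = A[i] := by
    rw [List.getElem_reverse]
    congr 1
    omega
  simpa only [DH, hget, List.mem_reverse] using
    pow_mul_iInf_edist_le_DHaux θ A.reverse B.reverse (A.length - 1 - i) hrev

/-- Soundness of k-bound pruning: if for some index j the decayed pointwise
lower bound already exceeds dist_k − (1−α)·dist_T (truncated subtraction in [0,∞]),
then the object-trajectory real-time distance α·D_H(A,B) + (1−α)·dist_T is ≥ dist_k. -/
theorem kBound_pruning_sound (θ α : ℝ) (hθ : 0 ≤ θ) (hα0 : 0 ≤ α) (hα1 : α ≤ 1)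
    (A B : List Pt) (hA : A ≠ []) (hB : B ≠ [])
    (distT distk : ℝ) (hT : 0 ≤ distT) (hk : 0 ≤ distk)
    (j : ℕ) (hj1 : 1 ≤ j) (hj2 : j ≤ A.length)
    (hprune : ENNReal.ofReal distk - ENNReal.ofReal (1 - α) * ENNReal.ofReal distT ≤
      ENNReal.ofReal α * (ENNReal.ofReal θ ^ (A.length - j) *
        ⨅ b ∈ B, edist (A.get ⟨j - 1, by omega⟩) b)) :
    ENNReal.ofReal distk ≤
      ENNReal.ofReal α * DH θ A B + ENNReal.ofReal (1 - α) * ENNReal.ofReal distT := by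
  have hlower : ENNReal.ofReal θ ^ (A.length - j) *
      (⨅ b ∈ B, edist (A.get ⟨j - 1, by omega⟩) b) ≤ DH θ A B := by
    have hexp : A.length - j = A.length - 1 - (j - 1) := by omega
    rw [hexp]
    exact pow_mul_iInf_edist_le_DH θ A B (j - 1) (by omega)
  calc ENNReal.ofReal distk
      ≤ ENNReal.ofReal α * (ENNReal.ofReal θ ^ (A.length - j) *
          ⨅ b ∈ B, edist (A.get ⟨j - 1, by omega⟩) b) +
          ENNReal.ofReal (1 - α) * ENNReal.ofReal distT := tsub_le_iff_right.mp hprune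
    _ ≤ ENNReal.ofReal α * DH θ A B + ENNReal.ofReal (1 - α) * ENNReal.ofReal distT := by
      gcongr

end
end

section
/- Upper error bound for granularity adjustment: Let θ > 0 be a real number, let A = ⟨a_1, …, a_c⟩ be a nonempty finite sequence of points of ℝ², let B be a finite sequence of points of ℝ², and let B' be a subsequence of B with |B'| ≥ |A|. Then D_H(A, B') ≤ M, where M = max{ θ^{c−j} · d(a_j, b) : 1 ≤ j ≤ c, b ∈ B' }, and consequently the approximation error satisfies D_H(A, B') − D_H(A, B) ≤ M − D_H(A, B) =: E^u, where subtraction is the truncated subtraction in [0, ∞] and d is the Euclidean distance. -/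
open scoped ENNReal

noncomputable section

open scoped NNReal

/-!
At each step the recursion takes a minimum, so any choice of branch bounds `D_H(A, B)` from above.
While at least two points of `A` remain, drop the last point of both sequences; once a single one is
left, drop only points of `B`. Since `|A| ≤ |B|`, this path never meets an empty sequence, and `a_j`
is compared with points of `B` only after `c - j` drops from `A`, each contributing a factor `θ`.
-/

/-- The largest discounted distance from a point of `A` to a point of `B`, where the entry of `A`
at index `i` is discounted by `r ^ i`. It is the paper's `M` for the reversed list `A`, whose head
is the last point of the trajectory. -/
def discountedMax {X : Type*} [EDist X] (r : ℝ≥0∞) (A B : List X) : ℝ≥0∞ :=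
  ⨆ i : Fin A.length, ⨆ b ∈ B, r ^ (i : ℕ) * edist (A.get i) b

section discountedMax

variable {X : Type*} [EDist X] (r : ℝ≥0∞)

lemma pow_mul_edist_le_discountedMax {A B : List X} (i : Fin A.length) {b : X} (hb : b ∈ B) :
    r ^ (i : ℕ) * edist (A.get i) b ≤ discountedMax r A B :=
  le_iSup_of_le i (le_iSup₂_of_le b hb le_rfl)

lemma edist_le_discountedMax_cons (a : X) (A : List X) {B : List X} {b : X} (hb : b ∈ B) :
    edist a b ≤ discountedMax r (a :: A) B := by
  simpa using pow_mul_edist_le_discountedMax r (A := a :: A) 0 hb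

lemma discountedMax_mono_right (A : List X) {B C : List X} (h : B ⊆ C) :
    discountedMax r A B ≤ discountedMax r A C :=
  iSup_mono fun _ ↦ biSup_mono fun _ hb ↦ h hb

lemma mul_discountedMax_le_discountedMax_cons (a : X) (A B : List X) :
    r * discountedMax r A B ≤ discountedMax r (a :: A) B := by
  simp only [discountedMax, ENNReal.mul_iSup, ← mul_assoc, ← pow_succ']
  exact iSup_le fun i ↦ iSup₂_le fun _ hb ↦
    pow_mul_edist_le_discountedMax r (A := a :: A) i.succ hb

lemma discountedMax_reverse_reverse (A B : List X) :
    discountedMax r A.reverse B.reverse =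
      ⨆ j : Fin A.length, ⨆ b ∈ B, r ^ (A.length - ((j : ℕ) + 1)) * edist (A.get j) b := by
  let e : Fin A.length ≃ Fin A.reverse.length :=
    Fin.revPerm.trans (finCongr A.length_reverse.symm)
  refine (e.iSup_congr fun j ↦ ?_).symm
  have h_val : (e j : ℕ) = A.length - ((j : ℕ) + 1) := rfl
  have h_get : A.reverse.get (e j) = A.get j := by
    simp only [List.get_eq_getElem, List.getElem_reverse, h_val]
    congr 1
    omega
  simp only [h_val, h_get, List.mem_reverse]

end discountedMax

section DHaux

variable (θ : ℝ) (a b : Pt) (A B : List Pt)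

lemma DHaux_cons_cons_le_max_min :
    DHaux θ (a :: A) (b :: B) ≤
      max (edist a b) (min (ENNReal.ofReal θ * DHaux θ A B) (DHaux θ (a :: A) B)) := by
  by_cases h : A = [] ∧ B = []
  · obtain ⟨rfl, rfl⟩ := h
    simp [DHaux]
  · refine le_of_eq ?_
    rw [DHaux]
    simpa using h

lemma DHaux_cons_cons_le_max_mul :
    DHaux θ (a :: A) (b :: B) ≤ max (edist a b) (ENNReal.ofReal θ * DHaux θ A B) :=
  (DHaux_cons_cons_le_max_min θ a b A B).trans (max_le_max_left _ (min_le_left _ _))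

lemma DHaux_cons_cons_le_max :
    DHaux θ (a :: A) (b :: B) ≤ max (edist a b) (DHaux θ (a :: A) B) :=
  (DHaux_cons_cons_le_max_min θ a b A B).trans (max_le_max_left _ (min_le_right _ _))

end DHaux

lemma DHaux_le_discountedMax (θ : ℝ) {A B : List Pt} (hA : A ≠ []) (hlen : A.length ≤ B.length) :
    DHaux θ A B ≤ discountedMax (ENNReal.ofReal θ) A B := by
  induction B generalizing A with
  | nil => simp_all
  | cons b B ih =>
    obtain ⟨a, A, rfl⟩ := List.exists_cons_of_ne_nil hA
    have h_mono := discountedMax_mono_right (ENNReal.ofReal θ) (a :: A) (B.subset_cons_self b)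
    have h_head : edist a b ≤ discountedMax (ENNReal.ofReal θ) (a :: A) (b :: B) :=
      edist_le_discountedMax_cons _ a A List.mem_cons_self
    rcases eq_or_ne A [] with rfl | hA'
    · rcases eq_or_ne B [] with rfl | hB
      · simpa [DHaux] using h_head
      · calc DHaux θ [a] (b :: B)
            ≤ max (edist a b) (DHaux θ [a] B) := DHaux_cons_cons_le_max θ a b [] B
          _ ≤ max (edist a b) (discountedMax (ENNReal.ofReal θ) [a] B) := by
              gcongr
              exact ih hA (List.length_pos_iff.mpr hB)
          _ ≤ discountedMax (ENNReal.ofReal θ) [a] (b :: B) := max_le h_head h_mono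
    · calc DHaux θ (a :: A) (b :: B)
          ≤ max (edist a b) (ENNReal.ofReal θ * DHaux θ A B) :=
            DHaux_cons_cons_le_max_mul θ a b A B
        _ ≤ max (edist a b) (ENNReal.ofReal θ * discountedMax (ENNReal.ofReal θ) A B) := by
            gcongr
            exact ih hA' (Nat.le_of_succ_le_succ hlen)
        _ ≤ discountedMax (ENNReal.ofReal θ) (a :: A) (b :: B) :=
            max_le h_head ((mul_discountedMax_le_discountedMax_cons _ a A B).trans h_mono)

theorem granularity_upper_error_bound_general (θ : ℝ≥0) {A B : List Pt}
    (hA : A ≠ []) (hlen : A.length ≤ B.length) :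
    DH θ A B ≤ ⨆ j : Fin A.length, ⨆ b ∈ B,
      (θ : ℝ≥0∞) ^ (A.length - ((j : ℕ) + 1)) * edist (A.get j) b := by
  rw [← discountedMax_reverse_reverse, ← ENNReal.ofReal_coe_nnreal]
  exact DHaux_le_discountedMax θ (by simpa using hA) (by simpa using hlen)

/-- Upper error bound for granularity adjustment: if B' is a subsequence of B with
|B'| ≥ |A|, then D_H(A, B') ≤ M := max{ θ^(c−j)·d(a_j, b) : 1 ≤ j ≤ c, b ∈ B' },
and consequently D_H(A,B') − D_H(A,B) ≤ M − D_H(A,B) (truncated subtraction in [0,∞]). -/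
theorem granularity_upper_error_bound (θ : ℝ) (hθ : 0 < θ) (A B B' : List Pt)
    (hA : A ≠ []) (hsub : B'.Sublist B) (hlen : A.length ≤ B'.length)
    (M : ℝ≥0∞)
    (hM : M = ⨆ j : Fin A.length, ⨆ b ∈ B',
        ENNReal.ofReal θ ^ (A.length - ((j : ℕ) + 1)) * edist (A.get j) b) :
    DH θ A B' ≤ M ∧ DH θ A B' - DH θ A B ≤ M - DH θ A B := by
  lift θ to ℝ≥0 using hθ.le
  have h_le : DH θ A B' ≤ M := by
    simpa [hM] using granularity_upper_error_bound_general θ hA hlen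
  exact ⟨h_le, tsub_le_tsub_right h_le _⟩

end
end

section
/- Correctness of the dynamic-programming segment partitioning recurrence: Let p_1, …, p_n be points of ℝ², let 1 ≤ l_min ≤ l_max be natural numbers, and for indices 1 ≤ i ≤ j ≤ n let area(i, j) = (max_{i ≤ m ≤ j} x_m − min_{i ≤ m ≤ j} x_m) · (max_{i ≤ m ≤ j} y_m − min_{i ≤ m ≤ j} y_m) denote the area of the minimum bounding rectangle of ⟨p_i, …, p_j⟩, where p_m = (x_m, y_m). Define F : ℕ → [0, ∞] by F(0) = 0 and, for 1 ≤ j ≤ n, F(j) = inf{ F(j − l) + area(j − l + 1, j) : l_min ≤ l ≤ l_max and l ≤ j } (with inf ∅ = ∞). Then for every 1 ≤ j ≤ n, F(j) equals the infimum, over all partitions of ⟨p_1, …, p_j⟩ into consecutive segments each of length between l_min and l_max, of the sum of the minimum-bounding-rectangle areas of the segments (and F(j) = ∞ exactly when no such partition exists). -/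
open scoped ENNReal

noncomputable section

/-- Area of the minimum bounding rectangle of the points p_i, …, p_j (inclusive,
1-indexed): the product of the coordinate ranges. -/
noncomputable def mbrArea (p : ℕ → Pt) (i j : ℕ) : ℝ≥0∞ :=
  ENNReal.ofReal
    ((sSup ((fun m => p m 0) '' Set.Icc i j) - sInf ((fun m => p m 0) '' Set.Icc i j)) *
     (sSup ((fun m => p m 1) '' Set.Icc i j) - sInf ((fun m => p m 1) '' Set.Icc i j)))

/-- The dynamic-programming value: F 0 = 0 and, for j ≥ 1,
F j = inf { F (j − l) + area(j − l + 1, j) : l_min ≤ l ≤ l_max, l ≤ j }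
(with inf ∅ = ∞). -/
noncomputable def F (p : ℕ → Pt) (lmin lmax : ℕ) (hmin : 1 ≤ lmin) : ℕ → ℝ≥0∞
  | 0 => 0
  | j + 1 =>
      ⨅ (l : ℕ) (_ : l ∈ Finset.Icc lmin (min lmax (j + 1))),
        F p lmin lmax hmin (j + 1 - l) + mbrArea p (j + 1 - l + 1) (j + 1)
  termination_by j => j
  decreasing_by
    rename_i h
    simp only [Finset.mem_Icc] at h
    omega

/-- Total MBR cost of a partition of the points starting after the first s points,
given by the list of consecutive block lengths. -/
noncomputable def partitionCost (p : ℕ → Pt) : ℕ → List ℕ → ℝ≥0∞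
  | _, [] => 0
  | s, l :: L => mbrArea p (s + 1) (s + l) + partitionCost p (s + l) L

/-!
The optimal cost `V` satisfies `V (k + l) ≤ V k + w k (k + l)`, because appending a block of
length `l` to a partition of the first `k` points partitions the first `k + l` points. By strong
induction, `V` therefore lies below every solution of the recurrence. Conversely, summing
`f (k + l) ≤ f k + w k (k + l)` over the blocks of a partition bounds a solution `f` by its cost.
-/

section BlockCost

variable {M : Type*} [AddMonoid M] {w : ℕ → ℕ → M}

/-- Total cost of the consecutive blocks of lengths `L` that follow position `s`, where the block
of the points `i + 1, …, j` costs `w i j`: blocks are indexed by their two cut positions. This is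
`partitionCost` with an arbitrary cost in place of the rectangle area. -/
def blockCost (w : ℕ → ℕ → M) : ℕ → List ℕ → M
  | _, [] => 0
  | s, l :: L => w s (s + l) + blockCost w (s + l) L

theorem blockCost_append (s : ℕ) (L L' : List ℕ) :
    blockCost w s (L ++ L') = blockCost w s L + blockCost w (s + L.sum) L' := by
  induction L generalizing s with
  | nil => simp [blockCost]
  | cons l L ih => simp only [List.cons_append, blockCost, ih, List.sum_cons, add_assoc]

theorem le_add_blockCost_of_le_add [Preorder M] [AddRightMono M] {S : Set ℕ} {f : ℕ → M}
    (hf : ∀ k, ∀ l ∈ S, f (k + l) ≤ f k + w k (k + l)) (s : ℕ) {L : List ℕ}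
    (hL : ∀ l ∈ L, l ∈ S) : f (s + L.sum) ≤ f s + blockCost w s L := by
  induction L generalizing s with
  | nil => simp [blockCost]
  | cons l L ih =>
    obtain ⟨hl, hL⟩ := List.forall_mem_cons.1 hL
    calc f (s + (l :: L).sum) = f (s + l + L.sum) := by rw [List.sum_cons, add_assoc]
      _ ≤ f (s + l) + blockCost w (s + l) L := ih (s + l) hL
      _ ≤ f s + w s (s + l) + blockCost w (s + l) L := by gcongr; exact hf s l hl
      _ = f s + blockCost w s (l :: L) := by rw [blockCost, add_assoc]

end BlockCost

section MinBlockCost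

variable {w : ℕ → ℕ → ℝ≥0∞} {S : Set ℕ} {f : ℕ → ℝ≥0∞}

/-- Least total cost of a partition of the first `j` points into blocks with lengths in `S`,
encoded by their list of lengths; it is `∞` if there is no such partition. -/
def minBlockCost (w : ℕ → ℕ → ℝ≥0∞) (S : Set ℕ) (j : ℕ) : ℝ≥0∞ :=
  ⨅ L ∈ {L : List ℕ | L.sum = j ∧ ∀ l ∈ L, l ∈ S}, blockCost w 0 L

theorem minBlockCost_zero : minBlockCost w S 0 = 0 :=
  nonpos_iff_eq_zero.1 (iInf₂_le [] (by simp))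

theorem minBlockCost_add_le (k : ℕ) {l : ℕ} (hl : l ∈ S) :
    minBlockCost w S (k + l) ≤ minBlockCost w S k + w k (k + l) := by
  simp only [minBlockCost, ENNReal.iInf_add]
  refine le_iInf₂ fun L ⟨hsum, hL⟩ => ?_
  have hmem : L ++ [l] ∈ {L : List ℕ | L.sum = k + l ∧ ∀ l ∈ L, l ∈ S} :=
    ⟨by simp [hsum], List.forall_mem_append.2 ⟨hL, List.forall_mem_singleton.2 hl⟩⟩
  have hcost : blockCost w 0 (L ++ [l]) = blockCost w 0 L + w k (k + l) := by
    simp [blockCost_append, blockCost, hsum]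
  exact (iInf₂_le _ hmem).trans_eq hcost

theorem minBlockCost_le_of_iInf_le (hS : 0 ∉ S)
    (hf : ∀ j ≠ 0, ⨅ l ∈ {l ∈ S | l ≤ j}, f (j - l) + w (j - l) j ≤ f j) (j : ℕ) :
    minBlockCost w S j ≤ f j := by
  induction j using Nat.strong_induction_on with
  | _ j ih =>
    rcases eq_or_ne j 0 with rfl | hj
    · exact minBlockCost_zero.trans_le zero_le
    · refine (le_iInf₂ fun l ⟨hl, hlj⟩ => ?_).trans (hf j hj)
      have hl0 : l ≠ 0 := ne_of_mem_of_not_mem hl hS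
      calc minBlockCost w S j ≤ minBlockCost w S (j - l) + w (j - l) j := by
            simpa only [Nat.sub_add_cancel hlj] using minBlockCost_add_le (w := w) (j - l) hl
        _ ≤ f (j - l) + w (j - l) j := by gcongr; exact ih (j - l) (by omega)

theorem le_minBlockCost_of_le_add (hf0 : f 0 = 0)
    (hf : ∀ k, ∀ l ∈ S, f (k + l) ≤ f k + w k (k + l)) (j : ℕ) : f j ≤ minBlockCost w S j := by
  refine le_iInf₂ fun L ⟨hsum, hL⟩ => ?_
  simpa only [hf0, zero_add, hsum] using le_add_blockCost_of_le_add hf 0 hL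

theorem F_eq_min_partition_cost_general (hS : 0 ∉ S) (hf0 : f 0 = 0)
    (hf : ∀ j ≠ 0, f j = ⨅ l ∈ {l ∈ S | l ≤ j}, f (j - l) + w (j - l) j) (j : ℕ) :
    f j = minBlockCost w S j := by
  refine le_antisymm (le_minBlockCost_of_le_add hf0 (fun k l hl => ?_) j)
    (minBlockCost_le_of_iInf_le hS (fun j hj => (hf j hj).ge) j)
  have hl0 : l ≠ 0 := ne_of_mem_of_not_mem hl hS
  rw [hf (k + l) (by omega)]
  exact (iInf₂_le l ⟨hl, Nat.le_add_left l k⟩).trans_eq (by rw [Nat.add_sub_cancel])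

end MinBlockCost

theorem partitionCost_eq_blockCost (p : ℕ → Pt) (s : ℕ) (L : List ℕ) :
    partitionCost p s L = blockCost (fun i j => mbrArea p (i + 1) j) s L := by
  induction L generalizing s with
  | nil => rfl
  | cons l L ih => rw [partitionCost, blockCost, ih]

theorem F_eq_iInf (p : ℕ → Pt) {lmin lmax : ℕ} (hmin : 1 ≤ lmin) {j : ℕ} (hj : j ≠ 0) :
    F p lmin lmax hmin j = ⨅ l ∈ {l ∈ Set.Icc lmin lmax | l ≤ j},
      F p lmin lmax hmin (j - l) + mbrArea p (j - l + 1) j := by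
  obtain ⟨j, rfl⟩ := Nat.exists_eq_succ_of_ne_zero hj
  rw [F]
  simp only [Finset.mem_Icc, le_min_iff, Set.mem_ofPred_eq, Set.mem_Icc, and_assoc,
    Nat.succ_eq_add_one]

/-- Correctness of the DP segment-partitioning recurrence: for 1 ≤ j ≤ n, F(j) equals
the infimum over all partitions of ⟨p_1, …, p_j⟩ into consecutive segments of lengths
between l_min and l_max of the total MBR area (inf ∅ = ∞, so F(j) = ∞ exactly when
no valid partition exists). -/
theorem F_eq_min_partition_cost (n : ℕ) (p : ℕ → Pt) (lmin lmax : ℕ)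
    (hmin : 1 ≤ lmin) (hminmax : lmin ≤ lmax) (j : ℕ) (hj1 : 1 ≤ j) (hj2 : j ≤ n) :
    F p lmin lmax hmin j =
      ⨅ L ∈ {L : List ℕ | L.sum = j ∧ ∀ l ∈ L, lmin ≤ l ∧ l ≤ lmax},
        partitionCost p 0 L := by
  simp only [partitionCost_eq_blockCost]
  exact F_eq_min_partition_cost_general (S := Set.Icc lmin lmax)
    (fun h => Nat.not_succ_le_zero 0 (hmin.trans h.1)) (by rw [F]) (fun _ => F_eq_iInf p hmin) j

end
end
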